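/- Let W be a standard Brownian motion on a probability space, let γ < 1/2 with γ ≠ 0, and let t > 0. Then the random variable B̃(t) := (1/t) ∫₀ᵗ s^{−γ−1} W(s) ds is well defined (the integral converges almost surely) and has the Gaussian distribution with mean 0 and variance 2 t^{−2γ−1} / ((1 − γ)(1 − 2γ)). -/

import Mathlib

open MeasureTheory Set Filter ProbabilityTheory

/-- A standard Brownian motion on `[0,∞)`: a measurable, a.s. continuous, Gaussian
process starting at `0` whose covariance function is `Cov(W(s), W(w)) = min s w`
(every finite linear combination of its values is centered Gaussian). -/
def IsStandardBrownianMotion {Ω : Type*} [MeasurableSpace Ω] (P : Measure Ω)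
    (W : ℝ → Ω → ℝ) : Prop :=
  IsProbabilityMeasure P ∧
  (∀ t, Measurable (W t)) ∧
  (∀ᵐ ω ∂P, ContinuousOn (fun t => W t ω) (Ici 0)) ∧
  (∀ᵐ ω ∂P, W 0 ω = 0) ∧
  (∀ (n : ℕ) (c : Fin n → ℝ) (ts : Fin n → ℝ), (∀ i, 0 ≤ ts i) →
    ∃ v : NNReal, Measure.map (fun ω => ∑ i, c i * W (ts i) ω) P = gaussianReal 0 v) ∧
  (∀ s ∈ Ici (0 : ℝ), ∀ w ∈ Ici (0 : ℝ), ∫ ω, W s ω * W w ω ∂P = min s w)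


open scoped Topology

def CG {Ω : Type*} [MeasurableSpace Ω] (P : Measure Ω) (X : Ω → ℝ) : Prop :=
  ∃ v : NNReal, Measure.map X P = gaussianReal 0 v

lemma CG.aem {Ω : Type*} [MeasurableSpace Ω] {P : Measure Ω} {X : Ω → ℝ} (h : CG P X) :
    AEMeasurable X P := by
  obtain ⟨v, hv⟩ := h
  by_contra hX
  rw [Measure.map_of_not_aemeasurable hX] at hv
  exact (IsProbabilityMeasure.ne_zero (gaussianReal 0 v)) hv.symm

lemma CG.congr {Ω : Type*} [MeasurableSpace Ω] {P : Measure Ω} {X Y : Ω → ℝ} (h : CG P X)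
    (hXY : X =ᵐ[P] Y) : CG P Y := by
  obtain ⟨v, hv⟩ := h
  exact ⟨v, by rw [← hv]; exact (Measure.map_congr hXY).symm⟩

lemma CG.lim {Ω : Type*} [MeasurableSpace Ω] {P : Measure Ω} [IsProbabilityMeasure P]
    {X : ℕ → Ω → ℝ} {Y : Ω → ℝ} (h : ∀ n, CG P (X n))
    (hXY : ∀ᵐ ω ∂P, Tendsto (fun n => X n ω) atTop (𝓝 (Y ω))) : CG P Y := by
  have hX := fun n => (h n).aem
  have hY : AEMeasurable Y P := aemeasurable_of_tendsto_metrizable_ae _ hX hXY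
  choose v hv using h
  have : IsProbabilityMeasure (P.map Y) := Measure.isProbabilityMeasure_map hY
  have hphi : ∀ u : ℝ, Tendsto (fun n => charFun (P.map (X n)) u) atTop
      (𝓝 (charFun (P.map Y) u)) := by
    intro u
    simp only [charFun_apply_real]
    have e : ∀ Z : Ω → ℝ, AEMeasurable Z P →
        ∫ x, Complex.exp (u * x * Complex.I) ∂(P.map Z) =
          ∫ ω, Complex.exp (u * (Z ω) * Complex.I) ∂P := by
      intro Z hZ
      rw [integral_map hZ]
      exact (by fun_prop : Continuous fun x : ℝ => Complex.exp (u * x * Complex.I)).aestronglyMeasurable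
    rw [e Y hY]
    simp_rw [fun n => e (X n) (hX n)]
    refine tendsto_integral_of_dominated_convergence (fun _ => 1) ?_ (integrable_const _) ?_ ?_
    · intro n
      exact (((by fun_prop : Continuous fun x : ℝ => Complex.exp (u * x * Complex.I)).measurable).comp_aemeasurable (hX n)).aestronglyMeasurable
    · intro n
      filter_upwards with ω
      rw [← Complex.ofReal_mul, Complex.norm_exp_ofReal_mul_I]
    · filter_upwards [hXY] with ω hω
      exact ((by fun_prop : Continuous fun x : ℝ => Complex.exp (u * x * Complex.I)).tendsto _).comp hω
  have hexp : ∀ u : ℝ, ∀ n, charFun (P.map (X n)) u = ((Real.exp (-(v n * u^2/2)) : ℝ) : ℂ) := by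
    intro u n
    rw [hv n, charFun_gaussianReal]
    push_cast
    congr 1
    simp
  simp_rw [hexp] at hphi
  obtain ⟨u, hu0, hu⟩ : ∃ u : ℝ, u ≠ 0 ∧ charFun (P.map Y) u ≠ 0 := by
    have hc : ContinuousAt (charFun (P.map Y)) 0 := continuous_charFun.continuousAt
    have h1 : ∀ᶠ u in 𝓝 (0:ℝ), charFun (P.map Y) u ≠ 0 :=
      hc.eventually_ne (by simp)
    have h2 : ∀ᶠ u in 𝓝[≠] (0:ℝ), charFun (P.map Y) u ≠ 0 := h1.filter_mono nhdsWithin_le_nhds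
    obtain ⟨u, a, b⟩ := (h2.and self_mem_nhdsWithin).exists
    exact ⟨u, b, a⟩
  have hlog := ((hphi u).norm.log (by simpa using hu)).const_mul (-(2/u^2))
  have hvl : Tendsto (fun n => ((v n : NNReal) : ℝ)) atTop
      (𝓝 (-(2/u^2) * Real.log ‖charFun (P.map Y) u‖)) := by
    refine hlog.congr fun n => ?_
    rw [Complex.norm_real, Real.norm_of_nonneg (Real.exp_pos _).le, Real.log_exp]
    field_simp
  set L := -(2/u^2) * Real.log ‖charFun (P.map Y) u‖
  have hL : 0 ≤ L := ge_of_tendsto' hvl fun n => (v n).2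
  refine ⟨L.toNNReal, ?_⟩
  apply Measure.ext_of_charFun
  ext w
  refine tendsto_nhds_unique (hphi w) ?_
  have : charFun (gaussianReal 0 L.toNNReal) w = ((Real.exp (-(L * w^2/2)) : ℝ) : ℂ) := by
    rw [charFun_gaussianReal]
    push_cast
    congr 1
    simp [Real.coe_toNNReal _ hL]
  rw [this]
  have hc : Continuous fun x : ℝ => ((Real.exp (-(x * w^2/2)) : ℝ) : ℂ) := by fun_prop
  exact (hc.tendsto L).comp hvl

lemma CG.second {Ω : Type*} [MeasurableSpace Ω] {P : Measure Ω} {X : Ω → ℝ} (h : CG P X) :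
    Measure.map X P = gaussianReal 0 (∫ ω, X ω ^ 2 ∂P).toNNReal := by
  have hX := h.aem
  obtain ⟨v, hv⟩ := h
  rw [hv]
  congr 1
  have : ∫ ω, X ω ^ 2 ∂P = ∫ x, x ^ 2 ∂(P.map X) := by
    rw [integral_map hX]
    exact (continuous_pow 2).aestronglyMeasurable
  rw [this, hv]
  have h2 := variance_fun_id_gaussianReal (μ := 0) (v := v)
  rw [variance_of_integral_eq_zero (by fun_prop) (by simp)] at h2
  rw [h2]; simp

/-- joint measurability of V, step approximations -/
lemma stepCG {Ω : Type*} [MeasurableSpace Ω] {P : Measure Ω} [IsProbabilityMeasure P]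
    {V : ℝ → Ω → ℝ} (hcont : ∀ ω, Continuous fun s => V s ω)
    (hg : ∀ (n : ℕ) (c : Fin n → ℝ) (ts : Fin n → ℝ), (∀ i, 0 ≤ ts i) →
      CG P (fun ω => ∑ i, c i * V (ts i) ω))
    {f : ℝ → ℝ} {ε t : ℝ} (hε : 0 < ε) (hf : IntegrableOn f (Ioc ε t)) :
    CG P (fun ω => ∫ s in Ioc ε t, f s * V s ω) := by
  refine CG.lim (X := fun n ω => ∫ s in Ioc ε t, f s * V ((⌊(n+1:ℝ) * s⌋₊ : ℝ) / (n+1)) ω) ?_ ?_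
  · intro n
    set M := ⌊(n+1:ℝ) * t⌋₊ + 1
    have key : (fun ω => ∑ i : Fin M, (∫ s in Ioc ε t, ({s : ℝ | ⌊(n+1:ℝ) * s⌋₊ = i}.indicator f s)) *
        V ((i:ℝ) / (n+1)) ω) = fun ω => ∫ s in Ioc ε t, f s * V ((⌊(n+1:ℝ) * s⌋₊ : ℝ) / (n+1)) ω := by
      ext ω
      simp_rw [← integral_mul_const]
      rw [← integral_finsetSum]
      · refine setIntegral_congr_fun measurableSet_Ioc ?_
        intro s hs
        have hlt : ⌊(n+1:ℝ) * s⌋₊ < M := by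
          refine Nat.lt_succ_of_le (Nat.floor_mono ?_)
          have := hs.2
          gcongr
        dsimp only
        rw [Finset.sum_eq_single (⟨_, hlt⟩ : Fin M)]
        · simp [indicator]
        · intro b _ hb
          rw [indicator_of_notMem, zero_mul]
          intro hh
          exact hb (Fin.ext hh.symm)
        · simp
      · intro i _
        refine Integrable.mul_const (hf.indicator ?_) _
        have : Measurable fun s : ℝ => ⌊(n+1:ℝ) * s⌋₊ := by fun_prop
        exact this (measurableSet_singleton _)
    rw [← key]
    exact hg M _ _ fun i => by positivity
  · filter_upwards with ω
    obtain ⟨C, hC⟩ := (isCompact_Icc (a := (0:ℝ)) (b := t)).exists_bound_of_continuousOn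
      (hcont ω).continuousOn
    have hVm := (hcont ω).measurable
    refine tendsto_integral_of_dominated_convergence (fun s => ‖f s‖ * C) ?_ (hf.norm.mul_const C) ?_ ?_
    · intro n
      refine hf.aestronglyMeasurable.mul ?_
      have : Measurable fun s : ℝ => ((⌊(n+1:ℝ) * s⌋₊ : ℝ) / (n+1)) := by fun_prop
      exact (hVm.comp this).aestronglyMeasurable
    · intro n
      filter_upwards [ae_restrict_mem measurableSet_Ioc] with s hs
      rw [norm_mul]
      gcongr
      apply hC
      refine ⟨by positivity, ?_⟩
      have : (⌊(n+1:ℝ) * s⌋₊ : ℝ) ≤ (n+1) * s := Nat.floor_le (mul_nonneg (by positivity) (hε.trans hs.1).le)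
      rw [div_le_iff₀ (by positivity)]
      nlinarith [hs.2]
    · filter_upwards [ae_restrict_mem measurableSet_Ioc] with s hs
      refine Tendsto.const_mul _ (((hcont ω).tendsto s).comp ?_)
      have h1 := tendsto_nat_floor_mul_div_atTop (R := ℝ) (a := s) (by linarith [hs.1])
      have h2 : Tendsto (fun n : ℕ => (n:ℝ) + 1) atTop atTop :=
        tendsto_atTop_add_const_right _ _ tendsto_natCast_atTop_atTop
      refine (h1.comp h2).congr fun n => ?_
      simp [mul_comm]

lemma var_integral (γ : ℝ) (hγ : γ < 1 / 2) (hγ0 : γ ≠ 0) (t : ℝ) (ht : 0 < t) :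
    ∫ w in Ioc 0 t, ∫ s in Ioc 0 t, w ^ (-γ-1) * s ^ (-γ-1) * min w s =
      t ^ 2 * (2 * t ^ (-2 * γ - 1) / ((1 - γ) * (1 - 2 * γ))) := by
  have inner : ∀ w ∈ Ioc 0 t, ∫ s in Ioc 0 t, w ^ (-γ-1) * s ^ (-γ-1) * min w s =
      (1/(1-γ) + 1/γ) * w ^ (-2*γ) - t ^ (-γ) / γ * w ^ (-γ) := by
    intro w hw
    obtain ⟨hw0, hwt⟩ := hw
    have e1 : EqOn (fun s => w ^ (-γ-1) * s ^ (-γ-1) * min w s) (fun s => w ^ (-γ-1) * s ^ (-γ))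
        (Ioc 0 w) := by
      intro s hs
      dsimp only
      rw [min_eq_right hs.2, mul_assoc, ← Real.rpow_add_one hs.1.ne']
      congr 2; ring
    have e2 : EqOn (fun s => w ^ (-γ-1) * s ^ (-γ-1) * min w s) (fun s => w ^ (-γ) * s ^ (-γ-1))
        (Ioc w t) := by
      intro s hs
      dsimp only
      rw [min_eq_left hs.1.le, mul_right_comm, ← Real.rpow_add_one hw0.ne']
      congr 2; ring
    have n0 : (0:ℝ) ∉ uIcc w t := by
      rw [uIcc_of_le hwt]; intro h; linarith [h.1]
    have i1 : IntegrableOn (fun s : ℝ => w ^ (-γ-1) * s ^ (-γ)) (Ioc 0 w) := by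
      rw [← intervalIntegrable_iff_integrableOn_Ioc_of_le hw0.le]
      exact (intervalIntegral.intervalIntegrable_rpow' (by linarith)).const_mul _
    have i2 : IntegrableOn (fun s : ℝ => w ^ (-γ) * s ^ (-γ-1)) (Ioc w t) := by
      rw [← intervalIntegrable_iff_integrableOn_Ioc_of_le hwt]
      exact (intervalIntegral.intervalIntegrable_rpow (Or.inr n0)).const_mul _
    rw [← Ioc_union_Ioc_eq_Ioc hw0.le hwt, setIntegral_union (Ioc_disjoint_Ioc_of_le le_rfl)
      measurableSet_Ioc (i1.congr_fun e1.symm measurableSet_Ioc)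
      (i2.congr_fun e2.symm measurableSet_Ioc), setIntegral_congr_fun measurableSet_Ioc e1,
      setIntegral_congr_fun measurableSet_Ioc e2, integral_const_mul, integral_const_mul,
      ← intervalIntegral.integral_of_le hw0.le, ← intervalIntegral.integral_of_le hwt,
      integral_rpow (Or.inl (by linarith)), integral_rpow (Or.inr ⟨by contrapose! hγ0; linarith, n0⟩),
      Real.zero_rpow (by linarith)]
    have a1 : -γ - 1 + 1 = -γ := by ring
    have a2 : w ^ (-2*γ) = w ^ (-γ) * w ^ (-γ) := by rw [← Real.rpow_add hw0]; ring_nf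
    have a3 : w ^ (-γ-1) * w ^ (-γ+1) = w ^ (-γ) * w ^ (-γ) := by
      rw [← Real.rpow_add hw0, ← Real.rpow_add hw0]; ring_nf
    have h1 : (1 - γ) ≠ 0 := by linarith
    rw [a1, a2, sub_zero, mul_div_assoc', a3]
    rw [show -γ + 1 = 1 - γ by ring]
    field_simp
    ring
  rw [setIntegral_congr_fun measurableSet_Ioc inner, ← intervalIntegral.integral_of_le ht.le,
    intervalIntegral.integral_sub, intervalIntegral.integral_const_mul,
    intervalIntegral.integral_const_mul, integral_rpow (Or.inl (by linarith)),
    integral_rpow (Or.inl (by linarith)), Real.zero_rpow (by linarith), Real.zero_rpow (by linarith)]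
  · have a1 : t ^ (-2*γ+1) = t ^ 2 * t ^ (-2*γ-1) := by
      rw [← Real.rpow_natCast, ← Real.rpow_add ht]; congr 1; push_cast; ring
    have a2 : t ^ (-γ) * t ^ (-γ+1) = t ^ 2 * t ^ (-2*γ-1) := by
      rw [← Real.rpow_natCast, ← Real.rpow_add ht, ← Real.rpow_add ht]; congr 1; push_cast; ring
    have h1 : (1 - γ) ≠ 0 := by linarith
    have h2 : (1 - 2*γ) ≠ 0 := by linarith
    rw [sub_zero, sub_zero, div_mul_div_comm, a1, a2,
      show -γ + 1 = 1 - γ by ring, show -2*γ + 1 = 1 - 2*γ by ring]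
    generalize t ^ (-2*γ-1) = T
    generalize t ^ 2 = U
    have h3 : γ * (1 - γ) ≠ 0 := mul_ne_zero hγ0 h1
    rw [div_add_div _ _ h1 hγ0, div_mul_div_comm, div_sub_div _ _ (by positivity) (by positivity),
      mul_div_assoc', div_eq_div_iff (by positivity) (by positivity)]
    ring
  · exact (intervalIntegral.intervalIntegrable_rpow' (by linarith)).const_mul _
  · exact (intervalIntegral.intervalIntegrable_rpow' (by linarith)).const_mul _

lemma absmul_bound {Ω : Type*} [MeasurableSpace Ω] {P : Measure Ω} {X Y : Ω → ℝ}
    (hX : Measurable X) (hY : Measurable Y) {a b : ℝ} (ha : 0 < a) (hb : 0 < b)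
    (hXX : ∫ ω, X ω * X ω ∂P = a) (hYY : ∫ ω, Y ω * Y ω ∂P = b) :
    Integrable (fun ω => X ω * Y ω) P ∧ ∫ ω, ‖X ω * Y ω‖ ∂P ≤ √a * √b := by
  have iX : Integrable (fun ω => X ω * X ω) P := .of_integral_ne_zero (by rw [hXX]; exact ha.ne')
  have iY : Integrable (fun ω => Y ω * Y ω) P := .of_integral_ne_zero (by rw [hYY]; exact hb.ne')
  have sa := Real.sqrt_pos.2 ha
  have sb := Real.sqrt_pos.2 hb
  have iB : Integrable (fun ω => √b/√a/2 * (X ω * X ω) + √a/√b/2 * (Y ω * Y ω)) P :=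
    (iX.const_mul _).add (iY.const_mul _)
  have hB : ∀ ω, ‖X ω * Y ω‖ ≤ √b/√a/2 * (X ω * X ω) + √a/√b/2 * (Y ω * Y ω) := by
    intro ω
    rw [norm_mul, Real.norm_eq_abs, Real.norm_eq_abs, ← abs_mul_abs_self (X ω),
      ← abs_mul_abs_self (Y ω)]
    have : √b/√a/2 * (|X ω| * |X ω|) + √a/√b/2 * (|Y ω| * |Y ω|) - |X ω| * |Y ω| =
      (√b * |X ω| - √a * |Y ω|)^2 / (2 * √a * √b) := by
      field_simp
      ring
    have h2 : 0 ≤ (√b * |X ω| - √a * |Y ω|)^2 / (2 * √a * √b) := by positivity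
    linarith
  have i := iB.mono' (hX.mul hY).aestronglyMeasurable (Eventually.of_forall hB)
  refine ⟨i, ?_⟩
  calc _ ≤ _ := integral_mono i.norm iB hB
    _ = √a * √b := by
      rw [integral_add (iX.const_mul _) (iY.const_mul _), integral_const_mul, integral_const_mul,
        hXX, hYY]
      have e1 : √b/√a/2 * a = √b/√a/2 * (√a * √a) := by rw [Real.mul_self_sqrt ha.le]
      have e2 : √a/√b/2 * b = √a/√b/2 * (√b * √b) := by rw [Real.mul_self_sqrt hb.le]
      rw [e1, e2]
      field_simp
      ring

lemma main_V {Ω : Type*} [MeasurableSpace Ω] {P : Measure Ω} [IsProbabilityMeasure P]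
    {V : ℝ → Ω → ℝ} (hcont : ∀ ω, Continuous fun s => V s ω) (hm : ∀ s, Measurable (V s))
    (hg : ∀ (n : ℕ) (c : Fin n → ℝ) (ts : Fin n → ℝ), (∀ i, 0 ≤ ts i) →
      CG P (fun ω => ∑ i, c i * V (ts i) ω))
    (hcov : ∀ s, 0 < s → ∀ w, 0 < w → ∫ ω, V s ω * V w ω ∂P = min s w)
    (γ : ℝ) (hγ : γ < 1 / 2) (hγ0 : γ ≠ 0) (t : ℝ) (ht : 0 < t) :
    (∀ᵐ ω ∂P, IntegrableOn (fun s => s ^ (-γ - 1) * V s ω) (Ioc (0 : ℝ) t)) ∧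
    Measure.map (fun ω => ∫ s in Ioc (0 : ℝ) t, s ^ (-γ - 1) * V s ω) P
      = gaussianReal 0 (t ^ 2 * (2 * t ^ (-2 * γ - 1) / ((1 - γ) * (1 - 2 * γ)))).toNNReal := by
  set μ : Measure ℝ := volume.restrict (Ioc 0 t) with hμ
  have hμpos : ∀ᵐ s ∂μ, 0 < s := by
    filter_upwards [ae_restrict_mem measurableSet_Ioc] with s hs using hs.1
  have hjoint : Measurable (Function.uncurry V) :=
    measurable_uncurry_of_continuous_of_measurable hcont hm
  have hjm : Measurable fun z : Ω × ℝ => V z.2 z.1 := hjoint.comp measurable_swap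
  have hfm : Measurable fun s : ℝ => s ^ (-γ - 1) := by fun_prop
  have hdom : Integrable (fun s : ℝ => s ^ (-γ - 1) * √s) μ := by
    have : IntegrableOn (fun s : ℝ => s ^ (-γ - 1/2)) (Ioc 0 t) := by
      rw [← intervalIntegrable_iff_integrableOn_Ioc_of_le ht.le]
      exact intervalIntegral.intervalIntegrable_rpow' (by linarith)
    refine this.congr_fun ?_ measurableSet_Ioc
    intro s hs
    dsimp only
    rw [Real.sqrt_eq_rpow, ← Real.rpow_add hs.1]; congr 1; ring
  have b1 : ∀ s, 0 < s → Integrable (V s) P ∧ ∫ ω, ‖V s ω‖ ∂P ≤ √s := by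
    intro s hs
    have := absmul_bound (P := P) (hm s) (measurable_const (a := (1:ℝ))) hs one_pos
      (by rw [hcov s hs s hs, min_self]) (by simp)
    simpa using this
  have I1 : Integrable (fun z : Ω × ℝ => z.2 ^ (-γ - 1) * V z.2 z.1) (P.prod μ) := by
    have hmeas : AEStronglyMeasurable (fun z : Ω × ℝ => z.2 ^ (-γ - 1) * V z.2 z.1) (P.prod μ) :=
      ((hfm.comp measurable_snd).mul hjm).aestronglyMeasurable
    refine (integrable_prod_iff' hmeas).2 ⟨?_, ?_⟩
    · filter_upwards [hμpos] with s hs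
      exact (b1 s hs).1.const_mul _
    · refine hdom.mono' hmeas.norm.prod_swap.integral_prod_right' ?_
      filter_upwards [hμpos] with s hs
      rw [Real.norm_of_nonneg (integral_nonneg fun _ => norm_nonneg _)]
      simp only [norm_mul]
      rw [integral_const_mul, Real.norm_of_nonneg (Real.rpow_nonneg hs.le _)]
      exact mul_le_mul_of_nonneg_left (b1 s hs).2 (Real.rpow_nonneg hs.le _)
  have A : ∀ᵐ ω ∂P, IntegrableOn (fun s => s ^ (-γ - 1) * V s ω) (Ioc (0 : ℝ) t) :=
    I1.prod_right_ae
  refine ⟨A, ?_⟩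
  have hCG : CG P (fun ω => ∫ s in Ioc (0 : ℝ) t, s ^ (-γ - 1) * V s ω) := by
    have hun : (⋃ n : ℕ, Ioc (1 / ((n:ℝ) + 1)) t) = Ioc 0 t := by
      ext x
      simp only [mem_iUnion, mem_Ioc]
      constructor
      · rintro ⟨n, h1, h2⟩
        exact ⟨lt_trans (by positivity) h1, h2⟩
      · rintro ⟨h1, h2⟩
        obtain ⟨n, hn⟩ := exists_nat_one_div_lt h1
        exact ⟨n, hn, h2⟩
    refine CG.lim (X := fun n ω => ∫ s in Ioc (1 / ((n:ℝ) + 1)) t, s ^ (-γ - 1) * V s ω) ?_ ?_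
    · intro n
      have hp : 0 < 1 / ((n:ℝ) + 1) := by positivity
      refine stepCG hcont hg hp ?_
      refine (ContinuousOn.integrableOn_Icc ?_).mono_set Ioc_subset_Icc_self
      intro x hx
      exact (Real.continuousAt_rpow_const _ _ (Or.inl (by linarith [hx.1]))).continuousWithinAt
    · filter_upwards [A] with ω hω
      rw [← hun]
      refine tendsto_setIntegral_of_monotone (fun _ => measurableSet_Ioc) ?_ (by rwa [hun])
      intro m n hmn
      refine Ioc_subset_Ioc_left ?_
      exact Nat.one_div_le_one_div hmn
  rw [hCG.second]
  congr 2
  have I2 : Integrable (Function.uncurry fun (ω : Ω) (z : ℝ × ℝ) =>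
      (z.1 ^ (-γ - 1) * V z.1 ω) * (z.2 ^ (-γ - 1) * V z.2 ω)) (P.prod (μ.prod μ)) := by
    have hmeas : AEStronglyMeasurable (Function.uncurry fun (ω : Ω) (z : ℝ × ℝ) =>
      (z.1 ^ (-γ - 1) * V z.1 ω) * (z.2 ^ (-γ - 1) * V z.2 ω)) (P.prod (μ.prod μ)) := by
      have m1 : Measurable fun p : Ω × ℝ × ℝ => V p.2.1 p.1 :=
        hjm.comp (measurable_fst.prodMk (measurable_fst.comp measurable_snd))
      have m2 : Measurable fun p : Ω × ℝ × ℝ => V p.2.2 p.1 :=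
        hjm.comp (measurable_fst.prodMk (measurable_snd.comp measurable_snd))
      exact (((hfm.comp (measurable_fst.comp measurable_snd)).mul m1).mul
        ((hfm.comp (measurable_snd.comp measurable_snd)).mul m2)).aestronglyMeasurable
    have hpos2 : ∀ᵐ z ∂(μ.prod μ), 0 < z.1 ∧ 0 < z.2 :=
      (Measure.quasiMeasurePreserving_fst.ae hμpos).and
        (Measure.quasiMeasurePreserving_snd.ae hμpos)
    have b2 : ∀ z : ℝ × ℝ, 0 < z.1 ∧ 0 < z.2 → Integrable (fun ω => V z.1 ω * V z.2 ω) P ∧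
        ∫ ω, ‖V z.1 ω * V z.2 ω‖ ∂P ≤ √z.1 * √z.2 := fun z hz =>
      absmul_bound (hm _) (hm _) hz.1 hz.2
        (by rw [hcov _ hz.1 _ hz.1, min_self]) (by rw [hcov _ hz.2 _ hz.2, min_self])
    have er : ∀ (z : ℝ × ℝ) ω, (z.1 ^ (-γ - 1) * V z.1 ω) * (z.2 ^ (-γ - 1) * V z.2 ω) =
        (z.1 ^ (-γ - 1) * z.2 ^ (-γ - 1)) * (V z.1 ω * V z.2 ω) := fun z ω => by ring
    refine (integrable_prod_iff' hmeas).2 ⟨?_, ?_⟩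
    · filter_upwards [hpos2] with z hz
      simp only [Function.uncurry_apply_pair, er]
      exact (b2 z hz).1.const_mul _
    · refine (hdom.mul_prod hdom).mono' hmeas.norm.prod_swap.integral_prod_right' ?_
      filter_upwards [hpos2] with z hz
      rw [Real.norm_of_nonneg (integral_nonneg fun _ => norm_nonneg _)]
      simp only [Function.uncurry_apply_pair, er]
      simp_rw [norm_mul (z.1 ^ (-γ - 1) * z.2 ^ (-γ - 1))]
      have p1 := Real.rpow_nonneg hz.1.le (-γ - 1)
      have p2 := Real.rpow_nonneg hz.2.le (-γ - 1)
      rw [integral_const_mul, Real.norm_of_nonneg (mul_nonneg p1 p2), mul_mul_mul_comm]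
      exact mul_le_mul_of_nonneg_left (b2 z hz).2 (mul_nonneg p1 p2)
  calc ∫ ω, (∫ s in Ioc (0 : ℝ) t, s ^ (-γ - 1) * V s ω) ^ 2 ∂P
      = ∫ ω, ∫ z, (z.1 ^ (-γ - 1) * V z.1 ω) * (z.2 ^ (-γ - 1) * V z.2 ω) ∂(μ.prod μ) ∂P := by
        congr 1; ext ω
        rw [integral_prod_mul (fun s => s ^ (-γ - 1) * V s ω) (fun s => s ^ (-γ - 1) * V s ω), sq]
    _ = ∫ z, ∫ ω, (z.1 ^ (-γ - 1) * V z.1 ω) * (z.2 ^ (-γ - 1) * V z.2 ω) ∂P ∂(μ.prod μ) :=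
        integral_integral_swap I2
    _ = ∫ w, ∫ s, ∫ ω, (w ^ (-γ - 1) * V w ω) * (s ^ (-γ - 1) * V s ω) ∂P ∂μ ∂μ :=
        integral_prod _ I2.integral_prod_right
    _ = ∫ w in Ioc 0 t, ∫ s in Ioc 0 t, w ^ (-γ-1) * s ^ (-γ-1) * min w s := by
        refine setIntegral_congr_fun measurableSet_Ioc fun w hw => ?_
        refine setIntegral_congr_fun measurableSet_Ioc fun s hs => ?_
        rw [← hcov w hw.1 s hs.1, ← integral_const_mul]
        congr 1; ext ω; ring
    _ = _ := var_integral γ hγ hγ0 t ht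

/-- for `γ < 1/2`, `γ ≠ 0` and `t > 0`, the random variable
`B̃(t) = (1/t)∫₀ᵗ s^(−γ−1) W(s) ds` is well defined (the integral converges a.s.)
and is Gaussian with mean `0` and variance `2 t^(−2γ−1)/((1−γ)(1−2γ))`. -/
theorem limiting_cvar_process_gaussian {Ω : Type*} [MeasurableSpace Ω]
    (P : Measure Ω) (W : ℝ → Ω → ℝ) (hW : IsStandardBrownianMotion P W)
    (γ : ℝ) (hγ : γ < 1 / 2) (hγ0 : γ ≠ 0) (t : ℝ) (ht : 0 < t) :
    (∀ᵐ ω ∂P, IntegrableOn (fun s => s ^ (-γ - 1) * W s ω) (Ioc (0 : ℝ) t)) ∧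
    Measure.map (fun ω => (1 / t) * ∫ s in Ioc (0 : ℝ) t, s ^ (-γ - 1) * W s ω) P
      = gaussianReal 0 (2 * t ^ (-2 * γ - 1) / ((1 - γ) * (1 - 2 * γ))).toNNReal := by
  classical
  obtain ⟨hP, hm, hc, -, hg, hcov⟩ := hW
  set N := toMeasurable P {ω | ¬ ContinuousOn (fun t => W t ω) (Ici 0)} with hN
  have hN0 : P N = 0 := by rw [hN, measure_toMeasurable]; exact hc
  have hNm : MeasurableSet N := measurableSet_toMeasurable _ _
  have hNae : ∀ᵐ ω ∂P, ω ∉ N := measure_eq_zero_iff_ae_notMem.1 hN0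
  set V : ℝ → Ω → ℝ := fun s ω => if ω ∈ N then 0 else W (max s 0) ω with hV
  have hVW : ∀ᵐ ω ∂P, ∀ s, 0 ≤ s → V s ω = W s ω := by
    filter_upwards [hNae] with ω hω s hs
    simp [hV, hω, hs]
  have hVm : ∀ s, Measurable (V s) := fun s => Measurable.ite hNm measurable_const (hm _)
  have hVc : ∀ ω, Continuous fun s => V s ω := by
    intro ω
    by_cases h : ω ∈ N
    · simp only [hV, h, if_true]; exact continuous_const
    · simp only [hV, h, if_false]
      have h2 : ContinuousOn (fun t => W t ω) (Ici 0) := by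
        by_contra h3
        exact h (subset_toMeasurable _ _ h3)
      exact h2.comp_continuous (by fun_prop : Continuous fun s : ℝ => max s 0)
        fun s => mem_Ici.2 (le_max_right _ _)
  have hVg : ∀ (n : ℕ) (c : Fin n → ℝ) (ts : Fin n → ℝ), (∀ i, 0 ≤ ts i) →
      CG P (fun ω => ∑ i, c i * V (ts i) ω) := by
    intro n c ts hts
    refine CG.congr (hg n c ts hts) ?_
    filter_upwards [hVW] with ω hω
    exact Finset.sum_congr rfl fun i _ => by rw [hω _ (hts i)]
  have hVcov : ∀ s, 0 < s → ∀ w, 0 < w → ∫ ω, V s ω * V w ω ∂P = min s w := by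
    intro s hs w hw
    rw [← hcov s hs.le w hw.le]
    refine integral_congr_ae ?_
    filter_upwards [hVW] with ω hω
    rw [hω _ hs.le, hω _ hw.le]
  obtain ⟨h1, h2⟩ := main_V hVc hVm hVg hVcov γ hγ hγ0 t ht
  have heq : ∀ᵐ ω ∂P, EqOn (fun s => s ^ (-γ - 1) * V s ω) (fun s => s ^ (-γ - 1) * W s ω)
      (Ioc 0 t) := by
    filter_upwards [hVW] with ω hω s hs
    simp only [hω s hs.1.le]
  constructor
  · filter_upwards [h1, heq] with ω a b
    exact a.congr_fun b measurableSet_Ioc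
  · have hX : AEMeasurable (fun ω => ∫ s in Ioc (0 : ℝ) t, s ^ (-γ - 1) * V s ω) P :=
      CG.aem ⟨_, h2⟩
    have e : (fun ω => (1 / t) * ∫ s in Ioc (0 : ℝ) t, s ^ (-γ - 1) * W s ω) =ᵐ[P]
        (fun x => (1 / t) * x) ∘ (fun ω => ∫ s in Ioc (0 : ℝ) t, s ^ (-γ - 1) * V s ω) := by
      filter_upwards [heq] with ω b
      simp only [Function.comp]
      rw [setIntegral_congr_fun measurableSet_Ioc b]
    rw [Measure.map_congr e, ← AEMeasurable.map_map_of_aemeasurable (by fun_prop) hX, h2,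
      gaussianReal_map_const_mul]
    have hp : 0 ≤ 2 * t ^ (-2 * γ - 1) / ((1 - γ) * (1 - 2 * γ)) := by
      have : 0 < 1 - γ := by linarith
      have : 0 < 1 - 2 * γ := by linarith
      positivity
    congr 1
    · simp
    · apply NNReal.coe_injective
      push_cast
      rw [Real.coe_toNNReal _ hp, Real.coe_toNNReal _ (mul_nonneg (sq_nonneg t) hp)]
      field_simp
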